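/- arXiv:2511.02422 — 5 statements merged into one kernel-verified Lean document; each statement's English description precedes it below -/
import Mathlib

section
/- Let m, K be positive integers, let p : Fin m → ℝ be a vector of p-values, let H₀ ⊆ Fin m be the set of true null hypotheses, and let t₁ ≤ t₂ ≤ … ≤ t_K be real thresholds. Write p_{(k:H₀)} for the k-th smallest value among (p_i)_{i∈H₀}. Suppose that for every k ∈ {1,…,min(K,|H₀|)} one has p_{(k:H₀)} ≥ t_k. Then for every subset S ⊆ Fin m and every k ∈ {1,…,K}, the number of false positives in S satisfies |S ∩ H₀| ≤ |S| − (1 − k + #{i ∈ S : p_i < t_k}); equivalently, |S \ H₀| ≥ max_{k∈{1,…,K}} (1 − k + #{i ∈ S : p_i < t_k}). -/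
/-- The `k`-th smallest value (1-based) among `(p i)_{i ∈ A}`. -/
noncomputable def orderStat {m : ℕ} (p : Fin m → ℝ) (A : Finset (Fin m)) (k : ℕ) : ℝ :=
  ((A.val.map p).sort (· ≤ ·)).getD (k - 1) 0

/-! If the `k`-th smallest null p-value is at least `t k`, then fewer than `k` null p-values lie
below `t k`; this is automatic when there are fewer than `k` nulls. Hence all but at most `k - 1` of
the indices in `S` whose p-value lies below `t k` belong to `S \ H0`. -/

theorem countP_lt_le_of_le_getElem {α : Type*} [Preorder α] [DecidableLT α] {l : List α}
    (hl : l.Pairwise (· ≤ ·)) {n : ℕ} (hn : n < l.length) {x : α} (hx : x ≤ l[n]) :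
    l.countP (· < x) ≤ n := by
  have countP_drop : (l.drop n).countP (· < x) = 0 := by
    have hdrop : (l[n] :: l.drop (n + 1)).Pairwise (· ≤ ·) :=
      List.drop_eq_getElem_cons hn ▸ hl.drop
    rw [List.drop_eq_getElem_cons hn, List.countP_eq_zero]
    have hle : ∀ y ∈ l[n] :: l.drop (n + 1), l[n] ≤ y :=
      List.forall_mem_cons.2 ⟨le_rfl, (List.pairwise_cons.1 hdrop).1⟩
    simpa only [decide_eq_true_eq] using fun y hy ↦ (hx.trans (hle y hy)).not_gt
  calc l.countP (· < x)
      = (l.take n).countP (· < x) + (l.drop n).countP (· < x) := by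
        rw [← List.countP_append, List.take_append_drop]
    _ = (l.take n).countP (· < x) := by rw [countP_drop, add_zero]
    _ ≤ (l.take n).length := List.countP_le_length
    _ ≤ n := List.length_take_le n l

theorem countP_sort_map_eq_card_filter {ι α : Type*} [LinearOrder α] (s : Finset ι) (f : ι → α)
    (q : α → Prop) [DecidablePred q] :
    ((s.val.map f).sort (· ≤ ·)).countP q = (s.filter fun i ↦ q (f i)).card := by
  rw [← Multiset.coe_countP, Multiset.sort_eq, Multiset.countP_map, Finset.card_def,
    Finset.filter_val]

theorem card_filter_lt_lt_of_le_orderStat {m : ℕ} {p : Fin m → ℝ} {A : Finset (Fin m)} {k : ℕ}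
    (hk : k ∈ Finset.Icc 1 A.card) {x : ℝ} (hx : x ≤ orderStat p A k) :
    (A.filter fun i ↦ p i < x).card < k := by
  obtain ⟨one_le_k, k_le_card⟩ := Finset.mem_Icc.1 hk
  have hlength : k - 1 < ((A.val.map p).sort (· ≤ ·)).length := by
    rw [Multiset.length_sort, Multiset.card_map, Finset.card_val]
    exact Nat.sub_one_lt_of_le one_le_k k_le_card
  rw [orderStat, List.getD_eq_getElem _ _ hlength] at hx
  rw [← countP_sort_map_eq_card_filter A p (· < x)]
  exact Nat.lt_of_le_pred one_le_k
    (countP_lt_le_of_le_getElem (Multiset.pairwise_sort _ _) hlength hx)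

theorem card_filter_le_card_sdiff_add_card_filter {ι : Type*} [DecidableEq ι] (s t : Finset ι)
    (q : ι → Prop) [DecidablePred q] :
    (s.filter q).card ≤ (s \ t).card + (t.filter q).card := by
  have hsubset : s.filter q ⊆ (s \ t) ∪ t.filter q := by
    intro i hi
    simp only [Finset.mem_filter, Finset.mem_union, Finset.mem_sdiff] at hi ⊢
    tauto
  exact (Finset.card_le_card hsubset).trans (Finset.card_union_le _ _)

theorem interpolation_false_positive_bound_general
    (m K : ℕ) (hK : 0 < K) (p : Fin m → ℝ) (H0 : Finset (Fin m)) (t : ℕ → ℝ)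
    (hcontrol : ∀ k ∈ Finset.Icc 1 (min K H0.card), t k ≤ orderStat p H0 k)
    (S : Finset (Fin m)) :
    (∀ k ∈ Finset.Icc 1 K,
      ((S ∩ H0).card : ℤ) ≤ (S.card : ℤ) -
        (1 - (k : ℤ) + ((S.filter (fun i ↦ p i < t k)).card : ℤ)))
    ∧ (Finset.Icc 1 K).sup' (Finset.nonempty_Icc.mpr hK)
        (fun k ↦ 1 - (k : ℤ) + ((S.filter (fun i ↦ p i < t k)).card : ℤ))
        ≤ ((S \ H0).card : ℤ) := by
  have card_null_lt : ∀ k ∈ Finset.Icc 1 K, (H0.filter fun i ↦ p i < t k).card < k := by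
    intro k hk
    obtain ⟨one_le_k, k_le_K⟩ := Finset.mem_Icc.1 hk
    rcases le_or_gt k H0.card with k_le_card | card_lt_k
    · exact card_filter_lt_lt_of_le_orderStat (Finset.mem_Icc.2 ⟨one_le_k, k_le_card⟩)
        (hcontrol k (Finset.mem_Icc.2 ⟨one_le_k, le_min k_le_K k_le_card⟩))
    · exact (Finset.card_filter_le _ _).trans_lt card_lt_k
  have le_card_sdiff : ∀ k ∈ Finset.Icc 1 K,
      1 - (k : ℤ) + ((S.filter fun i ↦ p i < t k).card : ℤ) ≤ ((S \ H0).card : ℤ) := by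
    intro k hk
    have hnull := card_null_lt k hk
    have hsplit := card_filter_le_card_sdiff_add_card_filter S H0 fun i ↦ p i < t k
    omega
  refine ⟨fun k hk ↦ ?_, Finset.sup'_le _ _ le_card_sdiff⟩
  have hbound := le_card_sdiff k hk
  have hpartition := Finset.card_sdiff_add_card_inter S H0
  omega

/-- Deterministic core of the interpolation post hoc bound of
Blanchard, Neuvial and Roquain (2020): if the null order statistics dominate
the (nondecreasing) template `t` up to `min K |H₀|`, then for every subset `S`
and every `k ∈ {1,…,K}`, `|S ∩ H₀| ≤ |S| − (1 − k + #{i ∈ S : pᵢ < t k})`;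
equivalently `|S \ H₀| ≥ max_{k ∈ {1,…,K}} (1 − k + #{i ∈ S : pᵢ < t k})`. -/
theorem interpolation_false_positive_bound
    (m K : ℕ) (hm : 0 < m) (hK : 0 < K)
    (p : Fin m → ℝ) (H0 : Finset (Fin m)) (t : ℕ → ℝ)
    (ht : ∀ j k, 1 ≤ j → j ≤ k → k ≤ K → t j ≤ t k)
    (hcontrol : ∀ k ∈ Finset.Icc 1 (min K H0.card), t k ≤ orderStat p H0 k) :
    ∀ S : Finset (Fin m),
      (∀ k ∈ Finset.Icc 1 K,
        ((S ∩ H0).card : ℤ) ≤ (S.card : ℤ) -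
          (1 - (k : ℤ) + ((S.filter (fun i => p i < t k)).card : ℤ)))
      ∧ (Finset.Icc 1 K).sup' (Finset.nonempty_Icc.mpr hK)
          (fun k => 1 - (k : ℤ) + ((S.filter (fun i => p i < t k)).card : ℤ))
          ≤ ((S \ H0).card : ℤ) := by
  exact interpolation_false_positive_bound_general m K hK p H0 t hcontrol
end

section
/- Let m, K be positive integers, let (Ω, 𝓕, ℙ) be a probability space, let p : Ω → (Fin m → ℝ) be a random vector of p-values, let H₀ ⊆ Fin m with |H₀| = m₀, and let t₁ ≤ … ≤ t_K be real thresholds. Define JER(t) = ℙ(∃ k ∈ {1,…,min(K,m₀)} : p_{(k:H₀)} < t_k), and for S ⊆ Fin m nonempty define TDP(S) = 1 − |S ∩ H₀|/|S| and the lower bound TDPbar^t(S) = |S|⁻¹ · max_{k∈{1,…,K}} (1 − k + #{i ∈ S : p_i < t_k}). If JER(t) ≤ α for some α ∈ [0,1], then ℙ( for every nonempty S ⊆ Fin m, TDP(S) ≥ TDPbar^t(S) ) ≥ 1 − α. -/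
open MeasureTheory

/-!
Off the JER event, `p_{(k:H₀)} ≥ t_k` for all `k ≤ min K |H₀|`, that is, fewer than `k` null
hypotheses have a p-value below `t_k`. For any `S`, the elements of `S` with p-value below `t_k` and
those of `S ∩ H₀` both lie in `S` and overlap only in such nulls, so inclusion-exclusion gives
`#{i ∈ S : p_i < t_k} + |S ∩ H₀| ≤ |S| + (k - 1)`: the bound `TDPbar^t(S) ≤ TDP(S)` holds pointwise
off the JER event, for all `S` at once.
-/

section

open Finset

theorem getElem_lt_iff_lt_countP_of_sortedLE {α : Type*} [Preorder α] [DecidableLT α]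
    {l : List α} (hl : l.SortedLE) {n : ℕ} (hn : n < l.length) {c : α} :
    l[n] < c ↔ n < l.countP (· < c) := by
  have card_eq_countP : #{j | l.get j < c} = l.countP (· < c) := by
    rw [← Multiset.coe_countP]
    conv_rhs => rw [← List.ofFn_get l, ← Fin.univ_val_map, Multiset.countP_map]
    rfl
  rw [← card_eq_countP]
  exact (Tuple.lt_card_lt_iff_apply_lt_of_monotone (j := ⟨n, hn⟩) hl.monotone_get).symm

theorem orderStat_lt_iff_le_card_filter_lt {m : ℕ} {p : Fin m → ℝ} {A : Finset (Fin m)} {k : ℕ}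
    (hk : 1 ≤ k) (hkA : k ≤ #A) {c : ℝ} :
    orderStat p A k < c ↔ k ≤ #{i ∈ A | p i < c} := by
  have index_lt : k - 1 < ((A.val.map p).sort (· ≤ ·)).length := by
    rw [Multiset.length_sort, Multiset.card_map, card_val]
    omega
  have countP_eq : ((A.val.map p).sort (· ≤ ·)).countP (· < c) = #{i ∈ A | p i < c} := by
    rw [← Multiset.coe_countP, Multiset.sort_eq, Multiset.countP_map]
    rfl
  rw [orderStat, List.getD_eq_getElem _ _ index_lt,
    getElem_lt_iff_lt_countP_of_sortedLE (Multiset.pairwise_sort _ _).sortedLE, countP_eq]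
  omega

theorem card_filter_lt_of_forall_le_orderStat {m K : ℕ} {p : Fin m → ℝ} {H : Finset (Fin m)}
    {t : ℕ → ℝ} (h : ∀ k ∈ Icc 1 (min K #H), t k ≤ orderStat p H k) {k : ℕ} (hk : k ∈ Icc 1 K) :
    #{i ∈ H | p i < t k} < k := by
  obtain ⟨one_le, le_K⟩ := mem_Icc.mp hk
  rcases le_or_gt k #H with hkH | hkH
  · rw [← not_le, ← orderStat_lt_iff_le_card_filter_lt one_le hkH, not_lt]
    exact h k (mem_Icc.mpr ⟨one_le, le_min le_K hkH⟩)
  · exact (card_filter_le _ _).trans_lt hkH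

theorem card_filter_add_card_inter_le {ι : Type*} [DecidableEq ι] (S T : Finset ι)
    (q : ι → Prop) [DecidablePred q] :
    #{i ∈ S | q i} + #(S ∩ T) ≤ #S + #{i ∈ T | q i} := by
  have union_subset : {i ∈ S | q i} ∪ S ∩ T ⊆ S :=
    Finset.union_subset (filter_subset _ _) inter_subset_left
  have inter_subset : {i ∈ S | q i} ∩ (S ∩ T) ⊆ {i ∈ T | q i} := by
    intro i hi
    simp only [mem_inter, mem_filter] at hi ⊢
    exact ⟨hi.2.2, hi.1.2⟩
  rw [← card_union_add_card_inter]
  exact add_le_add (card_le_card union_subset) (card_le_card inter_subset)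

theorem sup'_div_card_le_one_sub_of_card_filter_lt {ι α : Type*} [DecidableEq ι] [LT α]
    [DecidableLT α] {p : ι → α} {H : Finset ι} {t : ℕ → α} {I : Finset ℕ} (hI : I.Nonempty)
    (h : ∀ k ∈ I, #{i ∈ H | p i < t k} < k) {S : Finset ι} (hS : S.Nonempty) :
    ((I.sup' hI (fun k => 1 - (k : ℤ) + (#{i ∈ S | p i < t k} : ℤ)) : ℤ) : ℝ) / #S
      ≤ 1 - (#(S ∩ H) : ℝ) / #S := by
  have sup'_le_card_sub :
      I.sup' hI (fun k => 1 - (k : ℤ) + (#{i ∈ S | p i < t k} : ℤ)) ≤ #S - #(S ∩ H) := by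
    refine sup'_le hI _ fun k hk => ?_
    have card_le := card_filter_add_card_inter_le S H (p · < t k)
    have null_card_lt := h k hk
    omega
  have card_pos : (0 : ℝ) < #S := by exact_mod_cast hS.card_pos
  rw [one_sub_div card_pos.ne', div_le_div_iff_of_pos_right card_pos]
  exact_mod_cast sup'_le_card_sub

end

theorem ofReal_one_sub_le_measure_compl {Ω : Type*} [MeasurableSpace Ω] {μ : Measure Ω}
    [IsProbabilityMeasure μ] {s : Set Ω} {α : ℝ} (hα : 0 ≤ α) (hs : μ s ≤ ENNReal.ofReal α) :
    ENNReal.ofReal (1 - α) ≤ μ sᶜ :=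
  calc
    ENNReal.ofReal (1 - α) = 1 - ENNReal.ofReal α := by
      rw [ENNReal.ofReal_sub _ hα, ENNReal.ofReal_one]
    _ ≤ μ Set.univ - μ s := by
      rw [measure_univ]
      exact tsub_le_tsub_left hs 1
    _ ≤ μ sᶜ := by
      rw [Set.compl_eq_univ_sdiff]
      exact le_measure_sdiff

theorem jer_control_implies_posthoc_tdp_bound_general
    {Ω : Type*} [MeasurableSpace Ω] (μ : Measure Ω) [IsProbabilityMeasure μ]
    (m K : ℕ) (hK : 0 < K)
    (p : Ω → Fin m → ℝ) (H0 : Finset (Fin m)) (t : ℕ → ℝ)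
    (α : ℝ) (hα : 0 ≤ α)
    (hJER : μ {ω | ∃ k ∈ Finset.Icc 1 (min K H0.card), orderStat (p ω) H0 k < t k}
      ≤ ENNReal.ofReal α) :
    ENNReal.ofReal (1 - α) ≤
      μ {ω | ∀ S : Finset (Fin m), S.Nonempty →
        (((Finset.Icc 1 K).sup' (Finset.nonempty_Icc.mpr hK)
            (fun k => 1 - (k : ℤ) +
              ((S.filter (fun i => p ω i < t k)).card : ℤ)) : ℤ) : ℝ) / S.card
          ≤ 1 - ((S ∩ H0).card : ℝ) / S.card} := by
  refine (ofReal_one_sub_le_measure_compl hα hJER).trans (measure_mono fun ω hω S hS => ?_)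
  have le_orderStat : ∀ k ∈ Finset.Icc 1 (min K H0.card), t k ≤ orderStat (p ω) H0 k :=
    fun k hk => not_lt.mp fun hlt => hω ⟨k, hk, hlt⟩
  exact sup'_div_card_le_one_sub_of_card_filter_lt (Finset.nonempty_Icc.mpr hK)
    (fun _ hk => card_filter_lt_of_forall_le_orderStat le_orderStat hk) hS

/-- Interpolation theorem of Blanchard, Neuvial and Roquain (2020):
if the Joint Error Rate of the nondecreasing template `t` is at most `α`,
then with probability at least `1 − α`, simultaneously over all nonempty
subsets `S`, the true discovery proportion `TDP(S) = 1 − |S ∩ H₀|/|S|` is at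
least the interpolation bound
`TDPbar^t(S) = |S|⁻¹ · max_{k ∈ {1,…,K}} (1 − k + #{i ∈ S : pᵢ < t k})`. -/
theorem jer_control_implies_posthoc_tdp_bound
    {Ω : Type*} [MeasurableSpace Ω] (μ : Measure Ω) [IsProbabilityMeasure μ]
    (m K : ℕ) (hm : 0 < m) (hK : 0 < K)
    (p : Ω → Fin m → ℝ) (H0 : Finset (Fin m)) (t : ℕ → ℝ)
    (ht : ∀ j k, 1 ≤ j → j ≤ k → k ≤ K → t j ≤ t k)
    (α : ℝ) (hα : α ∈ Set.Icc (0 : ℝ) 1)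
    (hJER : μ {ω | ∃ k ∈ Finset.Icc 1 (min K H0.card), orderStat (p ω) H0 k < t k}
      ≤ ENNReal.ofReal α) :
    ENNReal.ofReal (1 - α) ≤
      μ {ω | ∀ S : Finset (Fin m), S.Nonempty →
        (((Finset.Icc 1 K).sup' (Finset.nonempty_Icc.mpr hK)
            (fun k => 1 - (k : ℤ) +
              ((S.filter (fun i => p ω i < t k)).card : ℤ)) : ℤ) : ℝ) / S.card
          ≤ 1 - ((S ∩ H0).card : ℝ) / S.card} :=
  jer_control_implies_posthoc_tdp_bound_general μ m K hK p H0 t α hα.1 hJER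
end

section
/- Let m₀ be a positive integer and let p₁, …, p_{m₀} be independent random variables on a probability space, each uniformly distributed on [0,1]. Let p_{(1)} ≤ … ≤ p_{(m₀)} denote their order statistics. Then for every α ∈ [0,1], ℙ(∃ k ∈ {1,…,m₀} : p_{(k)} < α k / m₀) ≤ α. -/
open MeasureTheory

/-!
Let `R` be the largest `k` such that at least `k` of the `p`-values lie below `α k / m₀`. Lowering
a `p`-value that is already below `α R / m₀` does not change `R`, so on the event `p i < α R / m₀`
one has `R = Rᵢ`, where `Rᵢ` is computed after replacing `p i` by a constant below all thresholds
and is therefore independent of `p i`. Counting the indices with `p i < α k / m₀` on `{R = k}` gives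
`k ℙ(R = k) ≤ ∑ᵢ ℙ(Rᵢ = k, p i < α k / m₀) ≤ ∑ᵢ ℙ(Rᵢ = k) α k / m₀`. Divide by `k` and sum.
-/

open ProbabilityTheory
open scoped ENNReal Finset

theorem getElem_lt_iff_lt_countP {E : Type*} [LinearOrder E] {l : List E}
    (hl : l.Pairwise (· ≤ ·)) {n : ℕ} (hn : n < l.length) (c : E) :
    l[n] < c ↔ n < l.countP (· < c) := by
  induction l generalizing n with
  | nil => simp at hn
  | cons a l ih =>
    obtain ⟨ha, htail⟩ := List.pairwise_cons.mp hl
    by_cases hac : a < c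
    · cases n with
      | zero => simp [hac]
      | succ n => simpa [hac] using ih htail (by simpa using hn)
    · have hall : ∀ x ∈ a :: l, c ≤ x := by
        simpa [not_lt.mp hac] using fun x hx => (not_lt.mp hac).trans (ha x hx)
      have hcount : (a :: l).countP (· < c) = 0 := by
        simpa only [List.countP_eq_zero, decide_eq_true_eq, not_lt] using hall
      simp only [hcount, not_lt_zero, iff_false, not_lt]
      exact hall _ (List.getElem_mem hn)

theorem orderStat_lt_iff {m k : ℕ} (p : Fin m → ℝ) {A : Finset (Fin m)}
    (hk : k ∈ Finset.Icc 1 #A) (c : ℝ) : orderStat p A k < c ↔ k ≤ #{i ∈ A | p i < c} := by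
  obtain ⟨hk_pos, hk_le⟩ := Finset.mem_Icc.mp hk
  set l := (A.val.map p).sort (· ≤ ·) with hl
  have hlength : k - 1 < l.length := by
    simp only [hl, Multiset.length_sort, Multiset.card_map, Finset.card_val]
    lia
  have hcount : l.countP (· < c) = #{i ∈ A | p i < c} := by
    rw [← Multiset.coe_countP, hl, Multiset.sort_eq, Multiset.countP_map]
    rfl
  rw [orderStat, ← hl, List.getD_eq_getElem _ _ hlength,
    getElem_lt_iff_lt_countP (Multiset.pairwise_sort _ _), hcount]
  lia

section StepUp

variable {ι E : Type*} [Fintype ι] [LinearOrder E]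

/-- The number of rejections of the step-up procedure with thresholds `c` at the `p`-values `q`:
the largest `k ≤ |ι|` such that at least `k` entries of `q` lie strictly below `c k`, or `0` if
there is no such positive `k`. -/
def stepUpCount (c : ℕ → E) (q : ι → E) : ℕ :=
  Nat.findGreatest (fun k => k ≤ #{i | q i < c k}) (Fintype.card ι)

theorem stepUpCount_le_card (c : ℕ → E) (q : ι → E) : stepUpCount c q ≤ Fintype.card ι :=
  Nat.findGreatest_le _

theorem stepUpCount_le_card_filter_lt (c : ℕ → E) (q : ι → E) :
    stepUpCount c q ≤ #{i | q i < c (stepUpCount c q)} :=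
  Nat.findGreatest_spec (P := fun k => k ≤ #{i | q i < c k}) (Nat.zero_le _) (Nat.zero_le _)

theorem stepUpCount_pos_iff (c : ℕ → E) (q : ι → E) :
    0 < stepUpCount c q ↔ ∃ k ∈ Finset.Icc 1 (Fintype.card ι), k ≤ #{i | q i < c k} := by
  simp only [stepUpCount, Nat.findGreatest_pos, Finset.mem_Icc, Nat.succ_le_iff, and_assoc]

theorem stepUpCount_update [DecidableEq ι] {c : ℕ → E} (hc : Monotone c) {q : ι → E} {i : ι}
    {x : E} (hq : q i < c (stepUpCount c q)) (hx : x < c (stepUpCount c q)) :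
    stepUpCount c (Function.update q i x) = stepUpCount c q := by
  have hcard : ∀ n, stepUpCount c q ≤ n →
      #{j | Function.update q i x j < c n} = #{j | q j < c n} := by
    intro n hn
    congr 1 with j
    obtain rfl | hj := eq_or_ne j i
    · simp [hq.trans_le (hc hn), hx.trans_le (hc hn)]
    · simp [hj]
  refine Nat.findGreatest_eq_iff.mpr ⟨stepUpCount_le_card c q, fun _ => ?_, fun n hn hn_le => ?_⟩
  · rw [hcard _ le_rfl]
    exact stepUpCount_le_card_filter_lt c q
  · rw [hcard n hn.le]
    exact Nat.findGreatest_is_greatest (P := fun k => k ≤ #{j | q j < c k}) hn hn_le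

theorem measurable_stepUpCount [TopologicalSpace E] [ClosedIciTopology E] [MeasurableSpace E]
    [OpensMeasurableSpace E] (c : ℕ → E) : Measurable (stepUpCount c : (ι → E) → ℕ) := by
  refine measurable_findGreatest fun k _ => measurableSet_le measurable_const ?_
  simp only [Finset.card_filter]
  exact Finset.measurable_sum _ fun i _ =>
    Measurable.ite (measurable_pi_apply i measurableSet_Iio) measurable_const measurable_const

end StepUp

section Probability

variable {Ω ι E : Type*} [MeasurableSpace Ω] {μ : Measure Ω}

theorem indepFun_update_of_iIndepFun [Finite ι] [DecidableEq ι] [MeasurableSpace E] {p : ι → Ω → E}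
    (hmeas : ∀ i, Measurable (p i)) (hindep : iIndepFun p μ) (i : ι) (x : E) :
    IndepFun (fun ω => Function.update (p · ω) i x) (p i) μ := by
  have := Fintype.ofFinite ι
  let extend (q : ({i}ᶜ : Finset ι) → E) (j : ι) : E :=
    if hj : j ∈ ({i}ᶜ : Finset ι) then q ⟨j, hj⟩ else x
  have hextend : Measurable extend := by
    refine measurable_pi_lambda _ fun j => ?_
    by_cases hj : j ∈ ({i}ᶜ : Finset ι) <;> simp only [extend, hj, ↓reduceDIte] <;> fun_prop
  have hupdate : (fun ω => Function.update (p · ω) i x) =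
      extend ∘ fun ω (j : ({i}ᶜ : Finset ι)) => p j ω := by
    funext ω j
    by_cases hj : j = i <;> simp [extend, hj]
  rw [hupdate]
  exact (hindep.indepFun_finset _ {i} disjoint_compl_left hmeas).comp hextend
    (measurable_pi_apply ⟨i, Finset.mem_singleton_self i⟩)

variable [Fintype ι]

theorem natCast_mul_measure_le_sum_measure_inter {A : Set Ω} {B : ι → Set Ω} {k : ℕ}
    [∀ i, DecidablePred (· ∈ B i)] (hB : ∀ i, MeasurableSet (B i))
    (hk : ∀ ω ∈ A, k ≤ #{i | ω ∈ B i}) : k * μ A ≤ ∑ i, μ (A ∩ B i) := by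
  have hindicator : ∀ i, Measurable ((B i).indicator (1 : Ω → ℝ≥0∞)) :=
    fun i => measurable_one.indicator (hB i)
  calc k * μ A = ∫⁻ _ in A, k ∂μ := (setLIntegral_const A _).symm
    _ ≤ ∫⁻ ω in A, ∑ i, (B i).indicator 1 ω ∂μ := by
      refine setLIntegral_mono (Finset.measurable_sum _ fun i _ => hindicator i) fun ω hω => ?_
      simpa [Set.indicator_apply] using hk ω hω
    _ = ∑ i, μ (A ∩ B i) := by
      rw [lintegral_finsetSum _ fun i _ => hindicator i]
      simp only [lintegral_indicator_one, hB, Measure.restrict_apply, Set.inter_comm]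

variable [LinearOrder E] [TopologicalSpace E] [ClosedIciTopology E] [MeasurableSpace E]
  [OpensMeasurableSpace E] {p : ι → Ω → E} {c : ℕ → E} {b : ℝ≥0∞}

theorem measure_stepUpCount_eq_le [DecidableEq ι] (hmeas : ∀ i, Measurable (p i))
    (hindep : iIndepFun p μ) (hc : Monotone c) {k : ℕ} (hk : k ≠ 0)
    (hp : ∀ i, μ {ω | p i ω < c k} ≤ k * b) {x : E} (hx : x < c k) :
    μ {ω | stepUpCount c (p · ω) = k} ≤
      (∑ i, μ {ω | stepUpCount c (Function.update (p · ω) i x) = k}) * b := by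
  let R (i : ι) (ω : Ω) : ℕ := stepUpCount c (Function.update (p · ω) i x)
  have hcount : ∀ ω ∈ {ω | stepUpCount c (p · ω) = k}, k ≤ #{i | ω ∈ {η | p i η < c k}} := by
    rintro ω rfl
    exact stepUpCount_le_card_filter_lt c (p · ω)
  have hleave_one_out : ∀ i, {ω | stepUpCount c (p · ω) = k} ∩ {ω | p i ω < c k} ⊆
      {ω | R i ω = k} ∩ {ω | p i ω < c k} := by
    rintro i ω ⟨rfl, hi⟩
    exact ⟨stepUpCount_update hc hi hx, hi⟩
  have hindepR : ∀ i, IndepFun (R i) (p i) μ := fun i =>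
    (indepFun_update_of_iIndepFun hmeas hindep i x).comp (measurable_stepUpCount c) measurable_id
  have hprod : ∀ i, μ ({ω | R i ω = k} ∩ {ω | p i ω < c k}) =
      μ {ω | R i ω = k} * μ {ω | p i ω < c k} := fun i =>
    (hindepR i).measure_inter_preimage_eq_mul {k} (Set.Iio (c k)) (measurableSet_singleton k)
      measurableSet_Iio
  refine (ENNReal.mul_le_mul_iff_right (Nat.cast_ne_zero.mpr hk) (ENNReal.natCast_ne_top k)).mp ?_
  calc k * μ {ω | stepUpCount c (p · ω) = k}
      ≤ ∑ i, μ ({ω | stepUpCount c (p · ω) = k} ∩ {ω | p i ω < c k}) :=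
        natCast_mul_measure_le_sum_measure_inter (fun i => hmeas i measurableSet_Iio) hcount
    _ ≤ ∑ i, μ ({ω | R i ω = k} ∩ {ω | p i ω < c k}) :=
        Finset.sum_le_sum fun i _ => measure_mono (hleave_one_out i)
    _ = ∑ i, μ {ω | R i ω = k} * μ {ω | p i ω < c k} := by simp only [hprod]
    _ ≤ ∑ i, μ {ω | R i ω = k} * (k * b) := by
        gcongr with i
        exact hp i
    _ = k * ((∑ i, μ {ω | R i ω = k}) * b) := by rw [← Finset.sum_mul, mul_left_comm]

theorem measure_stepUpCount_pos_le [NoMinOrder E] (hmeas : ∀ i, Measurable (p i))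
    (hindep : iIndepFun p μ) (hc : Monotone c)
    (hp : ∀ i, ∀ k ∈ Finset.Icc 1 (Fintype.card ι), μ {ω | p i ω < c k} ≤ k * b) :
    μ {ω | 0 < stepUpCount c (p · ω)} ≤ Fintype.card ι * b := by
  classical
  have := hindep.isProbabilityMeasure
  obtain ⟨x, hx⟩ := exists_lt (c 0)
  set K := Finset.Icc 1 (Fintype.card ι)
  let R (i : ι) (ω : Ω) : ℕ := stepUpCount c (Function.update (p · ω) i x)
  have hR : ∀ i, Measurable (R i) := fun i => (measurable_stepUpCount c).comp
    (measurable_update_left.comp (measurable_pi_lambda _ hmeas))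
  calc μ {ω | 0 < stepUpCount c (p · ω)}
      ≤ μ (⋃ k ∈ K, {ω | stepUpCount c (p · ω) = k}) := by
        refine measure_mono fun ω hω => Set.mem_biUnion (Finset.mem_Icc.mpr ?_) rfl
        exact ⟨hω, stepUpCount_le_card c _⟩
    _ ≤ ∑ k ∈ K, μ {ω | stepUpCount c (p · ω) = k} := measure_biUnion_finset_le _ _
    _ ≤ ∑ k ∈ K, (∑ i, μ (R i ⁻¹' {k})) * b := by
        gcongr with k hk
        exact measure_stepUpCount_eq_le hmeas hindep hc
          (Nat.one_le_iff_ne_zero.mp (Finset.mem_Icc.mp hk).1) (fun i => hp i k hk)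
          (hx.trans_le (hc (Nat.zero_le k)))
    _ = (∑ i, μ (R i ⁻¹' K)) * b := by
        rw [← Finset.sum_mul, Finset.sum_comm]
        simp only [sum_measure_preimage_singleton _ fun k _ => hR _ (measurableSet_singleton k)]
    _ ≤ (∑ _ : ι, 1) * b := by
        gcongr
        exact prob_le_one
    _ = Fintype.card ι * b := by simp

theorem measure_lt_le_of_map_eq_uniform {X : Ω → ℝ} (hX : AEMeasurable X μ)
    (hunif : μ.map X = volume.restrict (Set.Icc 0 1)) (t : ℝ) :
    μ {ω | X ω < t} ≤ ENNReal.ofReal t := by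
  calc μ {ω | X ω < t} = volume (Set.Iio t ∩ Set.Icc 0 1) := by
        rw [← Measure.restrict_apply measurableSet_Iio, ← hunif,
          Measure.map_apply_of_aemeasurable hX measurableSet_Iio]
        rfl
    _ ≤ volume (Set.Ico 0 t) := measure_mono fun _ hx => ⟨hx.2.1, hx.1⟩
    _ = ENNReal.ofReal t := by rw [Real.volume_Ico, sub_zero]

end Probability

theorem simes_inequality_general {Ω : Type*} [MeasurableSpace Ω] (μ : Measure Ω) (m₀ : ℕ)
    (p : Fin m₀ → Ω → ℝ) (hmeas : ∀ i, Measurable (p i)) (hindep : iIndepFun p μ)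
    (hsuper : ∀ i t, μ {ω | p i ω < t} ≤ ENNReal.ofReal t) (α : ℝ) (hα : 0 ≤ α) :
    μ {ω | ∃ k ∈ Finset.Icc 1 m₀, orderStat (fun i => p i ω) Finset.univ k < α * k / m₀}
      ≤ ENNReal.ofReal α := by
  let c (k : ℕ) : ℝ := α * k / m₀
  have hc : Monotone c := fun _ _ h => by dsimp only [c]; gcongr
  have hp : ∀ i, ∀ k ∈ Finset.Icc 1 (Fintype.card (Fin m₀)),
      μ {ω | p i ω < c k} ≤ k * ENNReal.ofReal (α / m₀) := by
    intro i k _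
    rw [← ENNReal.ofReal_natCast, ← ENNReal.ofReal_mul k.cast_nonneg, mul_div_left_comm,
      ← mul_div_assoc]
    exact hsuper i (c k)
  have hevent : ∀ ω, (∃ k ∈ Finset.Icc 1 m₀, orderStat (p · ω) Finset.univ k < c k) ↔
      0 < stepUpCount c (p · ω) := by
    intro ω
    rw [stepUpCount_pos_iff, Fintype.card_fin]
    exact exists_congr fun k => and_congr_right fun hk => orderStat_lt_iff _ (by simpa using hk) _
  calc μ {ω | ∃ k ∈ Finset.Icc 1 m₀, orderStat (p · ω) Finset.univ k < c k}
      = μ {ω | 0 < stepUpCount c (p · ω)} := by simp only [hevent]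
    _ ≤ m₀ * ENNReal.ofReal (α / m₀) := by
        simpa using measure_stepUpCount_pos_le hmeas hindep hc hp
    _ = ENNReal.ofReal (α / m₀ * m₀) := by
        rw [mul_comm, ENNReal.ofReal_mul' m₀.cast_nonneg, ENNReal.ofReal_natCast]
    _ ≤ ENNReal.ofReal α :=
        ENNReal.ofReal_le_ofReal (mul_le_of_le_div₀ hα m₀.cast_nonneg le_rfl)

/-- Simes (1986) inequality: for `m₀` independent `Uniform[0,1]` p-values,
the probability that some order statistic `p₍ₖ₎` falls strictly below
`α k / m₀` is at most `α`. -/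
theorem simes_inequality
    {Ω : Type*} [MeasurableSpace Ω] (μ : Measure Ω) [IsProbabilityMeasure μ]
    (m₀ : ℕ) (hm₀ : 0 < m₀) (p : Fin m₀ → Ω → ℝ)
    (hmeas : ∀ i, Measurable (p i))
    (hindep : ProbabilityTheory.iIndepFun p μ)
    (hunif : ∀ i, Measure.map (p i) μ = volume.restrict (Set.Icc (0 : ℝ) 1))
    (α : ℝ) (hα : α ∈ Set.Icc (0 : ℝ) 1) :
    μ {ω | ∃ k ∈ Finset.Icc 1 m₀,
        orderStat (fun i => p i ω) Finset.univ k < α * k / m₀}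
      ≤ ENNReal.ofReal α :=
  simes_inequality_general μ m₀ p hmeas hindep
    (fun i => measure_lt_le_of_map_eq_uniform (hmeas i).aemeasurable (hunif i)) α hα.1
end

section
/- Let m be a positive integer, α ∈ (0,1), and p : Fin m → ℝ a vector of p-values with order statistics p_{(1)} ≤ … ≤ p_{(m)}. Define the Hommel value h(α) = max{ i ∈ {0,1,…,m} : for all k ∈ {1,…,i}, p_{(m − i + k)} > α k / i } (with h(α) = 0 when no positive i qualifies). Let H₀ ⊆ Fin m with |H₀| = m₀ ≥ 1, and suppose the Simes event holds for the nulls: p_{(k:H₀)} > α k / m₀ for every k ∈ {1,…,m₀}. Then m₀ ≤ h(α). -/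
open scoped Classical in
/-- The Hommel (1988) value: the largest `i ∈ {0,…,m}` such that the `i`
largest p-values exceed the scaled Simes line `α k / i` for all `k ≤ i`
(`0` if no positive `i` qualifies; `i = 0` always qualifies vacuously). -/
noncomputable def hommelValue (m : ℕ) (α : ℝ) (p : Fin m → ℝ) : ℕ :=
  ((Finset.range (m + 1)).filter
    (fun i => ∀ k ∈ Finset.Icc 1 i, α * k / i < orderStat p Finset.univ (m - i + k))).sup id

/-!
Inserting elements into a sorted list raises the position of each old entry by at most the
number of elements inserted. Hence the `k`-th smallest null p-value is at most the
`(m - m₀ + k)`-th smallest p-value overall, so the Simes event for the nulls makes `i = m₀` one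
of the indices over which the Hommel value is the maximum.
-/

theorem getElem_le_getElem_of_sublist_of_sortedLE {β : Type*} [Preorder β] {l₁ l₂ : List β}
    (hsub : l₁.Sublist l₂) (hsorted : l₂.SortedLE) {i j : ℕ} (hi : i < l₁.length)
    (hj : j < l₂.length) (hij : l₂.length - l₁.length + i ≤ j) : l₁[i] ≤ l₂[j] := by
  obtain ⟨f, hf⟩ := List.sublist_iff_exists_orderEmbedding_getElem?_eq.1 hsub
  have f_lt : ∀ {n}, n < l₁.length → f n < l₂.length := fun {n} hn ↦
    (List.getElem?_eq_some_iff.1 ((hf n).symm.trans (List.getElem?_eq_getElem hn))).1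
  have f_le : f i ≤ j := by
    -- The entries of `l₁` after the `i`-th one need as many places of `l₂` after `f i`.
    have hroom := f.strictMono.add_le_nat (l₁.length - 1 - i) i
    have hlast : f (l₁.length - 1 - i + i) < l₂.length := f_lt (by lia)
    lia
  have getElem_eq : l₁[i] = l₂[f i]'(f_lt hi) := by
    simpa only [List.getElem?_eq_getElem, hi, f_lt hi, Option.some_inj] using hf i
  exact getElem_eq.trans_le (hsorted.getElem_le_getElem_of_le f_le)

theorem sort_sublist_sort {β : Type*} (r : β → β → Prop) [DecidableRel r] [IsTrans β r]
    [Std.Antisymm r] [Std.Total r] {s t : Multiset β} (h : s ≤ t) :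
    (s.sort r).Sublist (t.sort r) := by
  refine List.sublist_of_subperm_of_pairwise ?_ (s.pairwise_sort r) (t.pairwise_sort r)
  rwa [← Multiset.coe_le, Multiset.sort_eq, Multiset.sort_eq]

section OrderStat

variable {m : ℕ} {p : Fin m → ℝ} {A B : Finset (Fin m)} {k : ℕ}

theorem orderStat_eq_getElem (hk : k - 1 < ((A.val.map p).sort (· ≤ ·)).length) :
    orderStat p A k = ((A.val.map p).sort (· ≤ ·))[k - 1] :=
  List.getD_eq_getElem _ _ hk

theorem orderStat_le_orderStat_of_subset (hAB : A ⊆ B) (hk : k ∈ Finset.Icc 1 A.card) :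
    orderStat p A k ≤ orderStat p B (B.card - A.card + k) := by
  obtain ⟨one_le_k, k_le_card⟩ := Finset.mem_Icc.1 hk
  have card_le : A.card ≤ B.card := Finset.card_le_card hAB
  have length_sort (S : Finset (Fin m)) : ((S.val.map p).sort (· ≤ ·)).length = S.card := by
    rw [Multiset.length_sort, Multiset.card_map, Finset.card_val]
  have hA : k - 1 < ((A.val.map p).sort (· ≤ ·)).length := by rw [length_sort]; lia
  have hB : B.card - A.card + k - 1 < ((B.val.map p).sort (· ≤ ·)).length := by
    rw [length_sort]; lia
  rw [orderStat_eq_getElem hA, orderStat_eq_getElem hB]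
  refine getElem_le_getElem_of_sublist_of_sortedLE
    (sort_sublist_sort _ (Multiset.map_le_map (Finset.val_le_iff.2 hAB)))
    (Multiset.pairwise_sort _ _).sortedLE hA hB ?_
  rw [length_sort, length_sort]
  lia

end OrderStat

theorem le_hommelValue {m i : ℕ} {α : ℝ} {p : Fin m → ℝ} (hi : i ≤ m)
    (h : ∀ k ∈ Finset.Icc 1 i, α * k / i < orderStat p Finset.univ (m - i + k)) :
    i ≤ hommelValue m α p := by
  refine Finset.le_sup (f := id) ?_
  simp only [Finset.mem_filter]
  exact ⟨Finset.mem_range_succ_iff.2 hi, h⟩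

theorem card_nulls_le_hommelValue_on_simes_event_general
    (m : ℕ) (α : ℝ) (p : Fin m → ℝ) (H0 : Finset (Fin m)) (m₀ : ℕ) (hcard : H0.card = m₀)
    (hSimes : ∀ k ∈ Finset.Icc 1 m₀, α * k / m₀ < orderStat p H0 k) :
    m₀ ≤ hommelValue m α p := by
  subst hcard
  refine le_hommelValue (card_finset_fin_le H0) fun k hk ↦ (hSimes k hk).trans_le ?_
  simpa only [Finset.card_fin] using
    orderStat_le_orderStat_of_subset (p := p) (Finset.subset_univ H0) hk

/-- On the Simes event for the nulls (`p₍ₖ:H₀₎ > α k / m₀` for all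
`k ∈ {1,…,m₀}`), the number of true nulls is at most the Hommel value:
`m₀ ≤ h(α)`. -/
theorem card_nulls_le_hommelValue_on_simes_event
    (m : ℕ) (hm : 0 < m) (α : ℝ) (hα : α ∈ Set.Ioo (0 : ℝ) 1)
    (p : Fin m → ℝ) (H0 : Finset (Fin m)) (m₀ : ℕ) (hcard : H0.card = m₀) (hm₀ : 1 ≤ m₀)
    (hSimes : ∀ k ∈ Finset.Icc 1 m₀, α * k / m₀ < orderStat p H0 k) :
    m₀ ≤ hommelValue m α p :=
  card_nulls_le_hommelValue_on_simes_event_general m α p H0 m₀ hcard hSimes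
end

section
/- Let B be a positive integer, let (Y₁, …, Y_B) be an exchangeable family of random variables taking values in a measurable space E (i.e., the joint distribution of (Y_{σ(1)}, …, Y_{σ(B)}) equals that of (Y₁, …, Y_B) for every permutation σ of {1,…,B}), and let f : E → ℝ be measurable. Then for every α ∈ [0,1], ℙ( #{ b ∈ {1,…,B} : f(Y_b) ≤ f(Y₁) } ≤ ⌊αB⌋ ) ≤ ⌊αB⌋ / B ≤ α. -/
open MeasureTheory

/-!
Some permutation preserving the joint law carries any index to any other, so all the ranks have the
same distribution. On the other hand at most `k` indices can have rank at most `k`: among them, one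
with the largest value dominates all the others, so its rank is at least their number. Integrating
this count bounds the sum of the `B` equal probabilities of having rank at most `k` by `k`.
-/

open ProbabilityTheory Finset
open scoped ENNReal

section Rank

variable {ι R : Type*} [Fintype ι]

/-- The rank of `x i` among the values of a finite family `x`, counted from `1`. A tied value gets
the largest of the ranks that its ties occupy, so that ties only make small ranks rarer. -/
def maxRank [LE R] [DecidableLE R] (x : ι → R) (i : ι) : ℕ :=
  #{j | x j ≤ x i}

theorem maxRank_comp_perm [LE R] [DecidableLE R] (x : ι → R) (σ : Equiv.Perm ι) (i : ι) :
    maxRank (x ∘ σ) i = maxRank x (σ i) :=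
  card_equiv σ (by simp)

theorem card_maxRank_le [LinearOrder R] (x : ι → R) (k : ℕ) : #{i | maxRank x i ≤ k} ≤ k := by
  obtain hempty | hnonempty := (univ.filter fun i ↦ maxRank x i ≤ k).eq_empty_or_nonempty
  · simp [hempty]
  · obtain ⟨m, hm, hmax⟩ := exists_max_image _ x hnonempty
    calc #{i | maxRank x i ≤ k} ≤ maxRank x m :=
          card_le_card fun i hi ↦ mem_filter_univ i |>.2 (hmax i hi)
      _ ≤ k := (mem_filter_univ m).1 hm

theorem measurable_maxRank [PartialOrder R] [DecidableLE R] [TopologicalSpace R]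
    [OrderClosedTopology R] [SecondCountableTopology R] [MeasurableSpace R]
    [OpensMeasurableSpace R] (i : ι) :
    Measurable fun x : ι → R ↦ maxRank x i := by
  simp only [maxRank, card_filter]
  exact Finset.measurable_sum _ fun j _ ↦ Measurable.ite
    (measurableSet_le (measurable_pi_apply j) (measurable_pi_apply i))
    measurable_const measurable_const

end Rank

open Classical in
theorem sum_measure_le_of_card_le {Ω ι : Type*} [MeasurableSpace Ω] {μ : Measure Ω} {s : Finset ι}
    {A : ι → Set Ω} {k : ℕ} (hA : ∀ i ∈ s, NullMeasurableSet (A i) μ)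
    (hk : ∀ᵐ ω ∂μ, #{i ∈ s | ω ∈ A i} ≤ k) :
    ∑ i ∈ s, μ (A i) ≤ k * μ Set.univ :=
  calc ∑ i ∈ s, μ (A i) = ∑ i ∈ s, ∫⁻ ω, (A i).indicator 1 ω ∂μ :=
        sum_congr rfl fun i hi ↦ (lintegral_indicator_one₀ (hA i hi)).symm
    _ = ∫⁻ ω, ∑ i ∈ s, (A i).indicator 1 ω ∂μ :=
        (lintegral_finsetSum' s fun i hi ↦ aemeasurable_one.indicator₀ (hA i hi)).symm
    _ = ∫⁻ ω, #{i ∈ s | ω ∈ A i} ∂μ := by simp [Set.indicator_apply]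
    _ ≤ ∫⁻ _, k ∂μ := lintegral_mono_ae (hk.mono fun ω hω ↦ by exact_mod_cast hω)
    _ = k * μ Set.univ := lintegral_const _

section Exchangeability

variable {Ω ι E R : Type*} [MeasurableSpace Ω] [MeasurableSpace E] {μ : Measure Ω}

/-- Transitive exchangeability, the weakening of exchangeability in which the permutations that
preserve the joint law of `Y` need only act transitively on the indices, as the cyclic shifts do for
a stationary periodic sequence. `IdentDistrib` also records the a.e. measurability of `Y`. -/
def TransitivelyExchangeable (Y : ι → Ω → E) (μ : Measure Ω) : Prop :=
  ∀ i j, ∃ σ : Equiv.Perm ι, σ i = j ∧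
    IdentDistrib (fun ω b ↦ Y (σ b) ω) (fun ω b ↦ Y b ω) μ μ

namespace TransitivelyExchangeable

theorem comp [MeasurableSpace R] {Y : ι → Ω → E} (hY : TransitivelyExchangeable Y μ) {f : E → R}
    (hf : Measurable f) : TransitivelyExchangeable (fun b ω ↦ f (Y b ω)) μ := by
  intro i j
  obtain ⟨σ, hσ, hlaw⟩ := hY i j
  have hfpi : Measurable fun (y : ι → E) b ↦ f (y b) := by fun_prop
  exact ⟨σ, hσ, hlaw.comp hfpi⟩

variable [Fintype ι] [LinearOrder R] [TopologicalSpace R] [OrderClosedTopology R]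
  [SecondCountableTopology R] [MeasurableSpace R] [OpensMeasurableSpace R] {X : ι → Ω → R}

theorem identDistrib_maxRank (hX : TransitivelyExchangeable X μ) (i j : ι) :
    IdentDistrib (fun ω ↦ maxRank (X · ω) i) (fun ω ↦ maxRank (X · ω) j) μ μ := by
  obtain ⟨σ, rfl, hlaw⟩ := hX i j
  have hrank : (fun ω ↦ maxRank (X · ω) (σ i)) = fun ω ↦ maxRank (fun b ↦ X (σ b) ω) i :=
    funext fun ω ↦ (maxRank_comp_perm (X · ω) σ i).symm
  rw [hrank]
  exact (hlaw.comp (measurable_maxRank i)).symm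

theorem card_mul_measure_maxRank_le (hX : TransitivelyExchangeable X μ) (i : ι) (k : ℕ) :
    Fintype.card ι * μ {ω | maxRank (X · ω) i ≤ k} ≤ k * μ Set.univ :=
  calc Fintype.card ι * μ {ω | maxRank (X · ω) i ≤ k}
      = ∑ _j : ι, μ {ω | maxRank (X · ω) i ≤ k} := by simp
    _ = ∑ j, μ {ω | maxRank (X · ω) j ≤ k} :=
        sum_congr rfl fun j _ ↦ (hX.identDistrib_maxRank i j).measure_mem_eq measurableSet_Iic
    _ ≤ k * μ Set.univ := by
        refine sum_measure_le_of_card_le (fun j _ ↦ ?_) (.of_forall fun ω ↦ ?_)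
        · exact (hX.identDistrib_maxRank j j).aemeasurable_fst.nullMeasurableSet_preimage
            measurableSet_Iic
        · simpa using card_maxRank_le (X · ω) k

theorem measure_maxRank_le (hX : TransitivelyExchangeable X μ) (i : ι) (k : ℕ) :
    μ {ω | maxRank (X · ω) i ≤ k} ≤ k / Fintype.card ι * μ Set.univ := by
  have : Nonempty ι := ⟨i⟩
  rw [← ENNReal.mul_div_right_comm]
  refine ENNReal.le_div_iff_mul_le (by simp) (by simp) |>.2 ?_
  rw [mul_comm]
  exact hX.card_mul_measure_maxRank_le i k

end TransitivelyExchangeable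

theorem exchangeable_rank_bound_general [Fintype ι] [LinearOrder R] [TopologicalSpace R]
    [OrderClosedTopology R] [SecondCountableTopology R] [MeasurableSpace R]
    [OpensMeasurableSpace R] {X : ι → Ω → R} (hX : TransitivelyExchangeable X μ) (i : ι)
    {α : ℝ} (hα : 0 ≤ α) :
    μ {ω | maxRank (X · ω) i ≤ ⌊α * Fintype.card ι⌋₊}
        ≤ ENNReal.ofReal ((⌊α * Fintype.card ι⌋₊ : ℝ) / Fintype.card ι) * μ Set.univ
      ∧ (⌊α * Fintype.card ι⌋₊ : ℝ) / Fintype.card ι ≤ α := by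
  have hcard : (0 : ℝ) < Fintype.card ι := by exact_mod_cast Fintype.card_pos_iff.2 ⟨i⟩
  constructor
  · rw [ENNReal.ofReal_div_of_pos hcard, ENNReal.ofReal_natCast, ENNReal.ofReal_natCast]
    exact hX.measure_maxRank_le i _
  · exact (div_le_iff₀ hcard).2 (Nat.floor_le (by positivity))

end Exchangeability

/-- Rank-based lemma underlying permutation/randomization calibration
(Blanchard, Neuvial and Roquain, 2020): if `(Y₁,…,Y_B)` is exchangeable,
the observed statistic `f(Y₁)` falls among the `⌊αB⌋` smallest of the `B`
values with probability at most `⌊αB⌋/B ≤ α`. -/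
theorem exchangeable_rank_bound
    {Ω E : Type*} [MeasurableSpace Ω] [MeasurableSpace E]
    (μ : Measure Ω) [IsProbabilityMeasure μ]
    (B : ℕ) (hB : 0 < B) (Y : Fin B → Ω → E)
    (hmeas : ∀ b, Measurable (Y b))
    (hexch : ∀ σ : Equiv.Perm (Fin B),
      Measure.map (fun ω => fun b => Y (σ b) ω) μ = Measure.map (fun ω => fun b => Y b ω) μ)
    (f : E → ℝ) (hf : Measurable f)
    (α : ℝ) (hα : α ∈ Set.Icc (0 : ℝ) 1) :
    μ {ω | (Finset.univ.filter (fun b => f (Y b ω) ≤ f (Y ⟨0, hB⟩ ω))).card ≤ ⌊α * B⌋₊}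
        ≤ ENNReal.ofReal ((⌊α * B⌋₊ : ℝ) / B)
      ∧ (⌊α * B⌋₊ : ℝ) / B ≤ α := by
  have hY : TransitivelyExchangeable Y μ := fun i j ↦
    ⟨Equiv.swap i j, Equiv.swap_apply_left i j, by fun_prop, by fun_prop, hexch _⟩
  simpa [maxRank] using exchangeable_rank_bound_general (hY.comp hf) ⟨0, hB⟩ hα.1
end
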